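/- arXiv:2303.07793 — 2 statements merged into one kernel-verified Lean document; each statement's English description precedes it below -/
import Mathlib

section
/- Let Ω be a subset of ℝ^n. Then Ω is nearly convex if and only if the closure of Ω is convex and ri(cl Ω) ⊆ Ω. -/
/-!
Inside its affine span, a convex set with a nonempty intrinsic interior is a convex set with a
nonempty interior, and for such a set `s` one has `interior (closure s) = interior s` and
`closure (interior s) = closure s`. Hence `ri (closure C) = ri C ⊆ C` for every convex set `C` in a
finite-dimensional space, and if `closure Ω` is convex, then `ri (closure Ω)` is convex and dense in
`closure Ω`, so that it witnesses the near convexity of `Ω`.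
-/

open Set Metric

noncomputable section

/-- A set is *nearly convex* if it lies between a convex set and its closure. -/
def NearlyConvex {E : Type*} [NormedAddCommGroup E] [NormedSpace ℝ E] (s : Set E) : Prop :=
  ∃ C : Set E, Convex ℝ C ∧ C ⊆ s ∧ s ⊆ closure C

/-- The *relative interior* of a set: points `a ∈ s` admitting `δ > 0` with
`B(a,δ) ∩ aff s ⊆ s`. -/
def ri {E : Type*} [NormedAddCommGroup E] [NormedSpace ℝ E] (s : Set E) : Set E :=
  {a | a ∈ s ∧ ∃ δ > 0, Metric.ball a δ ∩ (affineSpan ℝ s : Set E) ⊆ s}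

section AffineSpan

variable {𝕜 V P : Type*}

lemma intrinsicInterior_eq_interior_of_affineSpan_eq_top [Ring 𝕜] [AddCommGroup V] [Module 𝕜 V]
    [TopologicalSpace P] [AddTorsor V P] {s : Set P} (hs : affineSpan 𝕜 s = ⊤) :
    intrinsicInterior 𝕜 s = interior s := by
  refine Subset.antisymm ?_ interior_subset_intrinsicInterior
  have hopen : IsOpen (affineSpan 𝕜 s : Set P) := by
    rw [hs]
    exact isOpen_univ
  exact interior_maximal intrinsicInterior_subset
    (hopen.isOpenMap_subtype_val _ isOpen_interior)

lemma exists_affineIsometry_range_eq_affineSpan [NormedField 𝕜] [SeminormedAddCommGroup V]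
    [NormedSpace 𝕜 V] [PseudoMetricSpace P] [NormedAddTorsor V P] {s : Set P} (hs : s.Nonempty) :
    ∃ (W : Submodule 𝕜 V) (φ : W →ᵃⁱ[𝕜] P), range φ = affineSpan 𝕜 s ∧
      affineSpan 𝕜 (φ ⁻¹' s) = ⊤ := by
  have : Nonempty s := hs.to_subtype
  let e := AffineIsometryEquiv.vaddConst 𝕜 (Classical.arbitrary (affineSpan 𝕜 s))
  refine ⟨_, (affineSpan 𝕜 s).subtypeₐᵢ.comp e.toAffineIsometry, ?_, ?_⟩
  · exact (e.surjective.range_comp _).trans Subtype.range_coe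
  · change affineSpan 𝕜 (e.toAffineEquiv ⁻¹' (Subtype.val ⁻¹' s)) = ⊤
    rw [← AffineSubspace.comap_span, affineSpan_coe_preimage_eq_top, AffineSubspace.comap_top]

end AffineSpan

section IntrinsicInterior

variable {E : Type*} [NormedAddCommGroup E] [NormedSpace ℝ E] {s : Set E}

lemma ri_eq_intrinsicInterior (s : Set E) : ri s = intrinsicInterior ℝ s := by
  ext a
  constructor
  · rintro ⟨has, δ, hδ, hball⟩
    refine ⟨⟨a, subset_affineSpan ℝ s has⟩, ?_, rfl⟩
    exact mem_interior_iff_mem_nhds.2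
      (Metric.mem_nhds_iff.2 ⟨δ, hδ, fun z hz => hball ⟨hz, z.2⟩⟩)
  · rintro ⟨a, ha, rfl⟩
    obtain ⟨δ, hδ, hball⟩ := Metric.mem_nhds_iff.1 (mem_interior_iff_mem_nhds.1 ha)
    have has : (a : E) ∈ s := interior_subset (s := Subtype.val ⁻¹' s) ha
    exact ⟨has, δ, hδ, fun z hz => @hball ⟨z, hz.2⟩ hz.1⟩

lemma exists_affineIsometry_intrinsicInterior_eq_image_interior (hs : Convex ℝ s)
    (hne : s.Nonempty) :
    ∃ (W : Submodule ℝ E) (φ : W →ᵃⁱ[ℝ] E) (t : Set W), range φ = affineSpan ℝ s ∧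
      Convex ℝ t ∧ affineSpan ℝ t = ⊤ ∧ φ '' t = s ∧ intrinsicInterior ℝ s = φ '' interior t := by
  obtain ⟨W, φ, hrange, htop⟩ := exists_affineIsometry_range_eq_affineSpan (𝕜 := ℝ) hne
  have himage : φ '' (φ ⁻¹' s) = s :=
    image_preimage_eq_of_subset (hrange ▸ subset_affineSpan ℝ s)
  refine ⟨W, φ, φ ⁻¹' s, hrange, hs.affine_preimage φ.toAffineMap, htop, himage, ?_⟩
  rw [← intrinsicInterior_eq_interior_of_affineSpan_eq_top htop, ← φ.intrinsicInterior_image,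
    himage]

lemma convex_intrinsicInterior (hs : Convex ℝ s) : Convex ℝ (intrinsicInterior ℝ s) := by
  rcases s.eq_empty_or_nonempty with rfl | hne
  · rwa [intrinsicInterior_empty]
  · obtain ⟨W, φ, t, -, ht, -, -, hint⟩ :=
      exists_affineIsometry_intrinsicInterior_eq_image_interior hs hne
    rw [hint]
    exact ht.interior.affine_image φ.toAffineMap

lemma closure_intrinsicInterior_eq_closure_of_nonempty (hs : Convex ℝ s)
    (hne : (intrinsicInterior ℝ s).Nonempty) : closure (intrinsicInterior ℝ s) = closure s := by
  obtain ⟨W, φ, t, -, ht, -, himage, hint⟩ :=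
    exists_affineIsometry_intrinsicInterior_eq_image_interior hs
      (hne.mono intrinsicInterior_subset)
  have hne' : (interior t).Nonempty := image_nonempty.1 (hint ▸ hne)
  refine (closure_mono intrinsicInterior_subset).antisymm
    (closure_minimal ?_ isClosed_closure)
  calc
    s = φ '' t := himage.symm
    _ ⊆ φ '' closure (interior t) := by
      rw [ht.closure_interior_eq_closure_of_nonempty_interior hne']
      exact image_mono subset_closure
    _ ⊆ closure (φ '' interior t) := image_closure_subset_closure_image φ.continuous
    _ = closure (intrinsicInterior ℝ s) := by rw [hint]

lemma intrinsicInterior_closure_eq_of_nonempty (hs : Convex ℝ s)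
    (hne : (intrinsicInterior ℝ s).Nonempty) (hclosed : IsClosed (affineSpan ℝ s : Set E)) :
    intrinsicInterior ℝ (closure s) = intrinsicInterior ℝ s := by
  obtain ⟨W, φ, t, hrange, ht, htop, himage, hint⟩ :=
    exists_affineIsometry_intrinsicInterior_eq_image_interior hs
      (hne.mono intrinsicInterior_subset)
  have hne' : (interior t).Nonempty := image_nonempty.1 (hint ▸ hne)
  have hφ : Topology.IsClosedEmbedding φ := ⟨φ.isometry.isEmbedding, hrange ▸ hclosed⟩
  have htop' : affineSpan ℝ (closure t) = ⊤ :=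
    top_le_iff.1 (htop ▸ affineSpan_mono ℝ subset_closure)
  calc
    intrinsicInterior ℝ (closure s) = intrinsicInterior ℝ (φ '' closure t) := by
      rw [← hφ.closure_image_eq, himage]
    _ = φ '' interior (closure t) := by
      rw [φ.intrinsicInterior_image, intrinsicInterior_eq_interior_of_affineSpan_eq_top htop']
    _ = φ '' interior t := by rw [ht.interior_closure_eq_interior_of_nonempty_interior hne']
    _ = intrinsicInterior ℝ s := hint.symm

variable [FiniteDimensional ℝ E]

lemma closure_intrinsicInterior (hs : Convex ℝ s) :
    closure (intrinsicInterior ℝ s) = closure s := by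
  rcases s.eq_empty_or_nonempty with rfl | hne
  · rw [intrinsicInterior_empty]
  · exact closure_intrinsicInterior_eq_closure_of_nonempty hs (hne.intrinsicInterior hs)

lemma intrinsicInterior_closure (hs : Convex ℝ s) :
    intrinsicInterior ℝ (closure s) = intrinsicInterior ℝ s := by
  rcases s.eq_empty_or_nonempty with rfl | hne
  · rw [closure_empty]
  · exact intrinsicInterior_closure_eq_of_nonempty hs (hne.intrinsicInterior hs)
      (AffineSubspace.closed_of_finiteDimensional _)

end IntrinsicInterior

theorem nearlyConvex_iff_closure_convex_and_ri_subset_general {E : Type*} [NormedAddCommGroup E]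
    [NormedSpace ℝ E] [FiniteDimensional ℝ E] (Ω : Set E) :
    NearlyConvex Ω ↔ Convex ℝ (closure Ω) ∧ ri (closure Ω) ⊆ Ω := by
  rw [ri_eq_intrinsicInterior]
  constructor
  · rintro ⟨C, hC, hCΩ, hΩC⟩
    have hcl : closure Ω = closure C :=
      (closure_minimal hΩC isClosed_closure).antisymm (closure_mono hCΩ)
    rw [hcl, intrinsicInterior_closure hC]
    exact ⟨hC.closure, intrinsicInterior_subset.trans hCΩ⟩
  · rintro ⟨hconv, hsub⟩
    refine ⟨intrinsicInterior ℝ (closure Ω), convex_intrinsicInterior hconv, hsub, ?_⟩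
    rw [closure_intrinsicInterior hconv, closure_closure]
    exact subset_closure

theorem nearlyConvex_iff_closure_convex_and_ri_subset (n : ℕ)
    (Ω : Set (EuclideanSpace ℝ (Fin n))) :
    NearlyConvex Ω ↔ Convex ℝ (closure Ω) ∧ ri (closure Ω) ⊆ Ω :=
  nearlyConvex_iff_closure_convex_and_ri_subset_general Ω
end
end

section
/- Let F : ℝ^n ⇒ ℝ^q and G : ℝ^p ⇒ ℝ^q be proper nearly convex set-valued mappings, and let A : ℝ^n → ℝ^p be a linear mapping. Define Φ : ℝ^n × ℝ^p ⇒ ℝ^q by Φ(x, y) = F(x) + G(Ax + y) (Minkowski sum). Then Φ is a nearly convex set-valued mapping. -/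
/-!
Near convexity passes to products and to images under continuous linear maps, the latter because
`T '' closure C ⊆ closure (T '' C)`. The graph of `(x, z) ↦ F x + G z` is a linear image of
`gph F ×ˢ gph G`, and the shear `(x, y) ↦ (x, A x + y)`, being invertible, turns it into the graph
of `(x, y) ↦ F x + G (A x + y)`.
-/

open Set Metric Pointwise

noncomputable section

/-- The graph of a set-valued mapping. -/
def gph {E P : Type*} (F : E → Set P) : Set (E × P) := {q | q.2 ∈ F q.1}

/-- The domain of a set-valued mapping. -/
def domSV {E P : Type*} (F : E → Set P) : Set E := {x | (F x).Nonempty}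

theorem gph_fst_add_snd_eq_image {X Y Q : Type*} [Add Q] (F : X → Set Q) (G : Y → Set Q) :
    gph (fun xz : X × Y => F xz.1 + G xz.2) =
      (fun w : (X × Q) × (Y × Q) => ((w.1.1, w.2.1), w.1.2 + w.2.2)) '' (gph F ×ˢ gph G) := by
  ext ⟨⟨x, z⟩, w⟩
  constructor
  · rintro ⟨u, hu, v, hv, rfl⟩
    exact ⟨((x, u), (z, v)), ⟨hu, hv⟩, rfl⟩
  · rintro ⟨⟨⟨_, u⟩, ⟨_, v⟩⟩, ⟨hu, hv⟩, ⟨⟩⟩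
    exact ⟨u, hu, v, hv, rfl⟩

namespace NearlyConvex

variable {X Y Q : Type*} [NormedAddCommGroup X] [NormedSpace ℝ X]
  [NormedAddCommGroup Y] [NormedSpace ℝ Y] [NormedAddCommGroup Q] [NormedSpace ℝ Q]

theorem prod {s : Set X} {t : Set Y} (hs : NearlyConvex s) (ht : NearlyConvex t) :
    NearlyConvex (s ×ˢ t) := by
  obtain ⟨C, hC, hCs, hsC⟩ := hs
  obtain ⟨D, hD, hDt, htD⟩ := ht
  refine ⟨C ×ˢ D, hC.prod hD, prod_mono hCs hDt, ?_⟩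
  rw [closure_prod_eq]
  exact prod_mono hsC htD

theorem image {s : Set X} (hs : NearlyConvex s) (T : X →L[ℝ] Y) : NearlyConvex (T '' s) := by
  obtain ⟨C, hC, hCs, hsC⟩ := hs
  exact ⟨T '' C, hC.linear_image T.toLinearMap, image_mono hCs,
    (image_mono hsC).trans (image_closure_subset_closure_image T.continuous)⟩

theorem preimage_equiv {s : Set Y} (hs : NearlyConvex s) (e : X ≃L[ℝ] Y) :
    NearlyConvex (e ⁻¹' s) := by
  rw [← e.image_symm_eq_preimage]
  exact hs.image (e.symm : Y →L[ℝ] X)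

theorem gph_comp_equiv {F : Y → Set Q} (hF : NearlyConvex (gph F)) (e : X ≃L[ℝ] Y) :
    NearlyConvex (gph (F ∘ e)) :=
  hF.preimage_equiv (e.prodCongr (.refl ℝ Q))

theorem gph_fst_add_snd {F : X → Set Q} {G : Y → Set Q}
    (hF : NearlyConvex (gph F)) (hG : NearlyConvex (gph G)) :
    NearlyConvex (gph (fun xz : X × Y => F xz.1 + G xz.2)) := by
  rw [gph_fst_add_snd_eq_image]
  exact (hF.prod hG).image
    (((ContinuousLinearMap.fst ℝ X Q).prodMap (.fst ℝ Y Q)).prod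
      ((ContinuousLinearMap.snd ℝ X Q).coprod (.snd ℝ Y Q)))

end NearlyConvex

theorem sum_comp_nearlyConvex_general {X Y Q : Type*} [NormedAddCommGroup X] [NormedSpace ℝ X]
    [NormedAddCommGroup Y] [NormedSpace ℝ Y] [NormedAddCommGroup Q] [NormedSpace ℝ Q]
    {F : X → Set Q} {G : Y → Set Q} (hF : NearlyConvex (gph F)) (hG : NearlyConvex (gph G))
    (A : X →L[ℝ] Y) :
    NearlyConvex (gph (fun xy : X × Y => F xy.1 + G (A xy.1 + xy.2))) := by
  let shear : (X × Y) ≃L[ℝ] X × Y :=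
    (ContinuousLinearEquiv.refl ℝ X).skewProd (.refl ℝ Y) A
  have hshear (xy : X × Y) : shear xy = (xy.1, A xy.1 + xy.2) := by
    simp [shear, add_comm]
  simpa only [Function.comp_def, hshear] using (hF.gph_fst_add_snd hG).gph_comp_equiv shear

theorem sum_comp_nearlyConvex (n p q : ℕ)
    (F : EuclideanSpace ℝ (Fin n) → Set (EuclideanSpace ℝ (Fin q)))
    (G : EuclideanSpace ℝ (Fin p) → Set (EuclideanSpace ℝ (Fin q)))
    (A : EuclideanSpace ℝ (Fin n) →ₗ[ℝ] EuclideanSpace ℝ (Fin p))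
    (hF : NearlyConvex (gph F)) (hG : NearlyConvex (gph G))
    (hFprop : (domSV F).Nonempty) (hGprop : (domSV G).Nonempty) :
    NearlyConvex (gph (fun xy : EuclideanSpace ℝ (Fin n) × EuclideanSpace ℝ (Fin p) =>
      F xy.1 + G (A xy.1 + xy.2))) :=
  sum_comp_nearlyConvex_general hF hG A.toContinuousLinearMap
end
end
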